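/- arXiv:math/0012063 — 2 statements merged into one kernel-verified Lean document; each statement's English description precedes it below -/
import Mathlib

section
/- Assume that every nonzero Darboux polynomial in R has the asserted form: for all p, q ∈ R with p ≠ 0 and D(p) = q·p there exist a nonzero ℓ ∈ F and a ∈ ℕ with p = C(ℓ)·det[X]^a. Then the extension K ⊇ F has no new constants: for every u ∈ K with D_K(u) = 0 there exists c ∈ F with d(c) = 0 and u = algebraMap F K c (composing F → R → K). -/
open MvPolynomial

/-- The polynomial ring `R = F{Y_ij}[X_ij]`: multivariate polynomials over `F` in the
variables `Y i j k` (indexed by `Sum.inl (i,j,k)`) and `X i j` (indexed by `Sum.inr (i,j)`). -/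
abbrev Rgen (F : Type*) [Field F] (n : ℕ) : Type _ :=
  MvPolynomial ((Fin n × Fin n × ℕ) ⊕ (Fin n × Fin n)) F

/-- `det[X]`: the determinant of the `n × n` matrix whose `(i,j)` entry is the variable `X i j`. -/
noncomputable def detX (F : Type*) [Field F] (n : ℕ) : Rgen F n :=
  (Matrix.of fun i j : Fin n => X (Sum.inr (i, j))).det

/-- The `F`-subalgebra `F{Y}` of `R` generated by all the variables `Y i j k`. -/
noncomputable def FY (F : Type*) [Field F] (n : ℕ) : Subalgebra F (Rgen F n) :=
  Algebra.adjoin F (Set.range fun v : Fin n × Fin n × ℕ => X (Sum.inl v))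

/-- The `F`-subalgebra `F[X]` of `R` generated by all the variables `X i j`. -/
noncomputable def FX (F : Type*) [Field F] (n : ℕ) : Subalgebra F (Rgen F n) :=
  Algebra.adjoin F (Set.range fun v : Fin n × Fin n => X (Sum.inr v))

/-!
A constant of the fraction field is a reduced fraction `p / q`, and differentiating it shows that
`p` and `q` are Darboux elements with the same cofactor; hence so is `p + q`. All three are thus
scalar multiples of powers of `x = det[X]`. As `p`, `q` and `p + q` are pairwise relatively prime,
at most one of them can involve `x`; the other two are scalars, and so is the third, being a sum
or a difference of scalars.
-/

theorem mem_bot_or_mem_bot_of_isRelPrime_smul_pow {F R : Type*} [CommSemiring F] [CommSemiring R]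
    [Algebra F R] {x p q : R} (hx : ¬IsUnit x) (hpq : IsRelPrime p q)
    (hp : ∃ (l : F) (a : ℕ), p = l • x ^ a) (hq : ∃ (m : F) (b : ℕ), q = m • x ^ b) :
    p ∈ (⊥ : Subalgebra F R) ∨ q ∈ (⊥ : Subalgebra F R) := by
  obtain ⟨l, a, rfl⟩ := hp
  obtain ⟨m, b, rfl⟩ := hq
  rcases eq_or_ne a 0 with rfl | ha
  · exact .inl (by simpa using Subalgebra.smul_mem ⊥ (one_mem _) l)
  rcases eq_or_ne b 0 with rfl | hb
  · exact .inr (by simpa using Subalgebra.smul_mem ⊥ (one_mem _) m)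
  · have hxp : x ∣ l • x ^ a := dvd_smul_of_dvd l (dvd_pow_self x ha)
    have hxq : x ∣ m • x ^ b := dvd_smul_of_dvd m (dvd_pow_self x hb)
    exact absurd (hpq hxp hxq) hx

theorem mem_bot_and_mem_bot_of_isRelPrime_smul_pow_of_add {F R : Type*} [CommRing F] [CommRing R]
    [Algebra F R] {x p q : R} (hx : ¬IsUnit x) (hpq : IsRelPrime p q)
    (hp : ∃ (l : F) (a : ℕ), p = l • x ^ a) (hq : ∃ (m : F) (b : ℕ), q = m • x ^ b)
    (hadd : ∃ (k : F) (c : ℕ), p + q = k • x ^ c) :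
    p ∈ (⊥ : Subalgebra F R) ∧ q ∈ (⊥ : Subalgebra F R) := by
  have hp_add : IsRelPrime p (p + q) := IsRelPrime.of_mul_add_left_right (z := -1) (by simpa)
  have hq_add : IsRelPrime q (p + q) :=
    IsRelPrime.of_add_mul_left_right (z := -1) (by simpa using hpq.symm)
  rcases mem_bot_or_mem_bot_of_isRelPrime_smul_pow hx hpq hp hq with hp_mem | hq_mem
  · refine ⟨hp_mem, ?_⟩
    rcases mem_bot_or_mem_bot_of_isRelPrime_smul_pow hx hq_add hq hadd with hq_mem | hadd_mem
    · exact hq_mem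
    · simpa using sub_mem hadd_mem hp_mem
  · refine ⟨?_, hq_mem⟩
    rcases mem_bot_or_mem_bot_of_isRelPrime_smul_pow hx hp_add hp hadd with hp_mem | hadd_mem
    · exact hp_mem
    · simpa using sub_mem hadd_mem hq_mem

section Constants

variable {R K : Type*} [CommRing R] [Field K] [Algebra R K] {D : Derivation ℤ R R}
  {DK : Derivation ℤ K K}

theorem derivation_mul_eq_mul_of_derivation_div_eq_zero [FaithfulSMul R K]
    (hDK : ∀ r, DK (algebraMap R K r) = algebraMap R K (D r)) {p q : R} (hq : q ≠ 0)
    (h : DK (algebraMap R K p / algebraMap R K q) = 0) : D p * q = p * D q := by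
  have hq' : algebraMap R K q ≠ 0 := by simpa
  apply FaithfulSMul.algebraMap_injective R K
  simpa [Derivation.leibniz_div, hDK, hq', sub_eq_zero, mul_comm] using h

theorem exists_isRelPrime_common_cofactor_of_derivation_eq_zero [IsDomain R]
    [UniqueFactorizationMonoid R] [IsFractionRing R K]
    (hDK : ∀ r, DK (algebraMap R K r) = algebraMap R K (D r)) {u : K} (hu : DK u = 0) :
    ∃ p q r : R, IsRelPrime p q ∧ algebraMap R K p / algebraMap R K q = u ∧
      D p = r * p ∧ D q = r * q := by
  obtain ⟨p, q, hpq, rfl⟩ := IsFractionRing.exists_reduced_fraction (A := R) u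
  rw [IsFractionRing.mk'_eq_div] at hu ⊢
  have hq : (q : R) ≠ 0 := nonZeroDivisors.coe_ne_zero q
  have hcross : D p * q = p * D q := derivation_mul_eq_mul_of_derivation_div_eq_zero hDK hq hu
  obtain ⟨r, hr⟩ : (q : R) ∣ D q := hpq.symm.dvd_of_dvd_mul_left (hcross ▸ dvd_mul_left _ _)
  refine ⟨p, q, r, hpq, rfl, mul_right_cancel₀ hq ?_, by rw [hr, mul_comm]⟩
  rw [hcross, hr]
  ring

theorem stmt_2_general {F : Type*} [Field F] [Algebra F R] [IsDomain R]
    [UniqueFactorizationMonoid R] [IsFractionRing R K]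
    (hDK : ∀ r, DK (algebraMap R K r) = algebraMap R K (D r)) {x : R} (hx : ¬IsUnit x)
    (hdarboux : ∀ p q : R, p ≠ 0 → D p = q * p → ∃ (l : F) (a : ℕ), p = l • x ^ a)
    {u : K} (hu : DK u = 0) :
    ∃ c : F, D (algebraMap F R c) = 0 ∧ u = algebraMap R K (algebraMap F R c) := by
  have hpow (p q : R) (h : D p = q * p) : ∃ (l : F) (a : ℕ), p = l • x ^ a := by
    rcases eq_or_ne p 0 with rfl | hp
    · exact ⟨0, 0, by simp⟩
    · exact hdarboux p q hp h
  obtain ⟨p, q, r, hpq, rfl, hp, hq⟩ :=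
    exists_isRelPrime_common_cofactor_of_derivation_eq_zero hDK hu
  have hadd : D (p + q) = r * (p + q) := by rw [map_add, hp, hq, mul_add]
  obtain ⟨hp_mem, hq_mem⟩ :=
    mem_bot_and_mem_bot_of_isRelPrime_smul_pow_of_add hx hpq (hpow p r hp) (hpow q r hq)
      (hpow (p + q) r hadd)
  obtain ⟨l, rfl⟩ := Algebra.mem_bot.1 hp_mem
  obtain ⟨m, rfl⟩ := Algebra.mem_bot.1 hq_mem
  have hdiv : algebraMap R K (algebraMap F R l) / algebraMap R K (algebraMap F R m) =
      algebraMap R K (algebraMap F R (l / m)) :=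
    (map_div₀ ((algebraMap R K).comp (algebraMap F R)) l m).symm
  refine ⟨l / m, IsFractionRing.injective R K ?_, hdiv⟩
  rw [← hDK, ← hdiv, hu, map_zero]

end Constants

/-- The `ℤ`-derivation given by an additive self-map satisfying the Leibniz rule, bundled to
make the `Derivation` API available. The base ring is `ℤ` because the derivation is not assumed to
vanish on any larger ring of scalars. -/
def derivationOfLeibniz {A : Type*} [CommRing A] (D : A → A)
    (hD_add : ∀ a b, D (a + b) = D a + D b) (hD_mul : ∀ a b, D (a * b) = D a * b + a * D b) :
    Derivation ℤ A A :=
  .mk' (AddMonoidHom.mk' D hD_add).toIntLinearMap fun a b ↦ by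
    simp [hD_mul, mul_comm, add_comm]

theorem constantCoeff_detX (F : Type*) [Field F] {n : ℕ} (hn : 1 ≤ n) :
    constantCoeff (detX F n) = 0 := by
  have : Nonempty (Fin n) := ⟨⟨0, hn⟩⟩
  rw [detX, RingHom.map_det, ← Matrix.det_zero (n := Fin n) (R := F)]
  congr 1
  ext i j
  simp

theorem not_isUnit_detX (F : Type*) [Field F] {n : ℕ} (hn : 1 ≤ n) : ¬IsUnit (detX F n) :=
  fun h ↦ not_isUnit_zero (constantCoeff_detX F hn ▸ h.map constantCoeff)

/-- If every nonzero Darboux polynomial in `R` is of the form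
`C ℓ * det[X]^a`, then the fraction field `K` of `R` has no new constants over `F`. -/
theorem stmt_2
    {F : Type*} [Field F] [CharZero F] (d : F → F)
    (hd_add : ∀ a b : F, d (a + b) = d a + d b)
    (hd_mul : ∀ a b : F, d (a * b) = d a * b + a * d b)
    (n : ℕ) (hn : 1 ≤ n)
    (D : Rgen F n → Rgen F n)
    (hD_add : ∀ a b, D (a + b) = D a + D b)
    (hD_mul : ∀ a b, D (a * b) = D a * b + a * D b)
    (hD_C : ∀ f : F, D (C f) = C (d f))
    (hD_Y : ∀ (i j : Fin n) (k : ℕ),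
      D (X (Sum.inl (i, j, k))) = X (Sum.inl (i, j, k + 1)))
    (hD_X : ∀ i j : Fin n,
      D (X (Sum.inr (i, j))) = ∑ l : Fin n, X (Sum.inl (i, l, 0)) * X (Sum.inr (l, j)))
    (DK : FractionRing (Rgen F n) → FractionRing (Rgen F n))
    (hDK_add : ∀ a b, DK (a + b) = DK a + DK b)
    (hDK_mul : ∀ a b, DK (a * b) = DK a * b + a * DK b)
    (hDK_comp : ∀ r : Rgen F n,
      DK (algebraMap (Rgen F n) (FractionRing (Rgen F n)) r) =
        algebraMap (Rgen F n) (FractionRing (Rgen F n)) (D r))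
    (hdarboux : ∀ p q : Rgen F n, p ≠ 0 → D p = q * p →
      ∃ (l : F) (a : ℕ), l ≠ 0 ∧ p = C l * detX F n ^ a) :
    ∀ u : FractionRing (Rgen F n), DK u = 0 →
      ∃ c : F, d c = 0 ∧
        u = algebraMap (Rgen F n) (FractionRing (Rgen F n)) (C c) := by
  intro u hu
  obtain ⟨c, hc, rfl⟩ := stmt_2_general (D := derivationOfLeibniz D hD_add hD_mul)
    (DK := derivationOfLeibniz DK hDK_add hDK_mul) hDK_comp (not_isUnit_detX F hn)
    (fun p q hp hpq ↦ (hdarboux p q hp hpq).imp fun l ⟨a, _, h⟩ ↦ ⟨a, by rwa [smul_eq_C_mul]⟩) hu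
  exact ⟨c, C_injective _ F (by rw [← hD_C, C_0]; exact hc), rfl⟩
end

section
/- Let p ∈ F[X] be nonzero and q ∈ F{Y} with D(p) = q·p, and let α = lp(p). Then α_{ij} = 0 whenever j ≠ n+1−i; moreover, if α ≠ 0 then α_{i,n+1−i} > 0 for every 1 ≤ i ≤ n. That is, the leading monomial of p is of the form X_{1n}^{α_{1n}}·X_{2,n−1}^{α_{2,n−1}}·⋯·X_{n1}^{α_{n1}}, supported on the antidiagonal. -/
open MvPolynomial

/-- Strict degree reverse lexicographic comparison `α < β` of exponent vectors in the
`X`-variables, for the variable ordering `X 1 1 > X 1 2 > ⋯ > X 1 n > X 2 1 > ⋯ > X n n`: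
either the total degree of `α` is smaller, or the total degrees agree and at the last
(rightmost, i.e. smallest) variable where they differ, `α` has the larger exponent. -/
def degRevLexLT {n : ℕ} (α β : (Fin n × Fin n) →₀ ℕ) : Prop :=
  (∑ v : Fin n × Fin n, α v) < (∑ v : Fin n × Fin n, β v) ∨
  ((∑ v : Fin n × Fin n, α v) = (∑ v : Fin n × Fin n, β v) ∧
    ∃ v : Fin n × Fin n, β v < α v ∧
      ∀ w : Fin n × Fin n, (v.1 < w.1 ∨ (v.1 = w.1 ∧ v.2 < w.2)) → α w = β w)

/-! The identity `D p = q p` is linear in the entries of the generic matrix `Y`, so specializing `Y`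
to matrix units shows that `p` is an eigenvector of every derivation `∑ j, X l j ∂ / ∂X i j`. These
derivations span a copy of `gl n`, whose commutators kill `p`; hence `p` is invariant under `sl n`
and the scalar matrices act on it through one eigenvalue `c`. By Cramer's rule this reads
`Δ ∂p = c p ∂Δ` for every partial derivative, where `Δ = det X`: the logarithmic derivative of `p`
is that of `Δ ^ c`. Comparing leading coefficients, the leading exponent of `p` is `c` times that
of `Δ`, which is the antidiagonal. -/

section DegRevLex

variable {n : ℕ}

theorem degRevLexLT.add_ne_add {α β γ δ : Fin n × Fin n →₀ ℕ} (hβα : degRevLexLT β α)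
    (hγδ : degRevLexLT γ δ) : β + γ ≠ α + δ := by
  intro h
  have hpt (v) : β v + γ v = α v + δ v := DFunLike.congr_fun h v
  have hdeg : ∑ v, β v + ∑ v, γ v = ∑ v, α v + ∑ v, δ v := by
    simp only [← Finset.sum_add_distrib, hpt]
  rcases hβα with hβα | ⟨hβα, v, hv, hv'⟩ <;> rcases hγδ with hγδ | ⟨hγδ, w, hw, hw'⟩
  iterate 3 omega
  have hptv := hpt v
  have hptw := hpt w
  rcases lt_trichotomy (toLex v) (toLex w) with hvw | hvw | hvw
  · have := hv' w (Prod.Lex.lt_iff.1 hvw)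
    omega
  · obtain rfl : v = w := hvw
    omega
  · have := hw' v (Prod.Lex.lt_iff.1 hvw)
    omega

variable {R : Type*} [CommSemiring R]

/-- `α` is the exponent of the leading monomial of `p` in the degree reverse lexicographic order;
in particular `p ≠ 0`. -/
def IsLeadingExponent (p : MvPolynomial (Fin n × Fin n) R) (α : Fin n × Fin n →₀ ℕ) : Prop :=
  α ∈ p.support ∧ ∀ β ∈ p.support, β ≠ α → degRevLexLT β α

namespace IsLeadingExponent

variable {p q : MvPolynomial (Fin n × Fin n) R} {α β : Fin n × Fin n →₀ ℕ}

theorem coeff_ne_zero (hα : IsLeadingExponent p α) : coeff α p ≠ 0 :=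
  mem_support_iff.1 hα.1

theorem uniqueAdd_support (hα : IsLeadingExponent p α) (hβ : IsLeadingExponent q β) :
    UniqueAdd p.support q.support α β := by
  intro γ δ hγ hδ h
  by_cases hγα : γ = α
  · exact ⟨hγα, add_left_cancel (hγα ▸ h)⟩
  by_cases hδβ : δ = β
  · exact ⟨add_right_cancel (hδβ ▸ h), hδβ⟩
  exact absurd h ((hα.2 γ hγ hγα).add_ne_add (hβ.2 δ hδ hδβ))

end IsLeadingExponent

end DegRevLex

section Euler

variable {σ R : Type*} [CommSemiring R]

theorem coeff_X_mul_pderiv (v : σ) (p : MvPolynomial σ R) (β : σ →₀ ℕ) :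
    coeff β (X v * pderiv v p) = β v * coeff β p := by
  classical
  induction p using MvPolynomial.induction_on' with
  | monomial γ a =>
    rw [X_mul_pderiv_monomial, coeff_smul, coeff_monomial, nsmul_eq_mul]
    split_ifs with h <;> simp [h]
  | add p q hp hq => simp only [map_add, mul_add, coeff_add, hp, hq]

theorem support_X_mul_pderiv_subset (v : σ) (p : MvPolynomial σ R) :
    (X v * pderiv v p).support ⊆ p.support := fun β hβ => by
  rw [mem_support_iff, coeff_X_mul_pderiv] at hβ
  exact mem_support_iff.2 (right_ne_zero_of_mul hβ)

theorem coeff_mul_of_uniqueAdd {p q : MvPolynomial σ R} {α β : σ →₀ ℕ}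
    (h : UniqueAdd p.support q.support α β) :
    coeff (α + β) (p * q) = coeff α p * coeff β q :=
  AddMonoidAlgebra.coeff_mul_add_of_uniqueAdd h

theorem coeff_mul_X_mul_pderiv {p q : MvPolynomial σ R} {α β : σ →₀ ℕ}
    (h : UniqueAdd p.support q.support α β) (v : σ) :
    coeff (α + β) (p * (X v * pderiv v q)) = β v * (coeff α p * coeff β q) := by
  rw [coeff_mul_of_uniqueAdd (h.mono subset_rfl (support_X_mul_pderiv_subset v q)),
    coeff_X_mul_pderiv, mul_left_comm]

end Euler

theorem IsLeadingExponent.cast_apply_eq_mul {R : Type*} [CommSemiring R] [IsDomain R] {n : ℕ}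
    {p q : MvPolynomial (Fin n × Fin n) R} {α β : Fin n × Fin n →₀ ℕ}
    (hα : IsLeadingExponent p α) (hβ : IsLeadingExponent q β) {c : R} {v : Fin n × Fin n}
    (h : q * pderiv v p = c • (p * pderiv v q)) : (α v : R) = c * β v := by
  have hcoeff : coeff (β + α) (q * (X v * pderiv v p)) =
      c * coeff (α + β) (p * (X v * pderiv v q)) := by
    rw [mul_left_comm q, mul_left_comm p, h, mul_smul_comm, coeff_smul, smul_eq_mul, add_comm β]
  rw [coeff_mul_X_mul_pderiv (hβ.uniqueAdd_support hα),
    coeff_mul_X_mul_pderiv (hα.uniqueAdd_support hβ), mul_comm (coeff β q), ← mul_assoc c] at hcoeff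
  exact mul_right_cancel₀ (mul_ne_zero hα.coeff_ne_zero hβ.coeff_ne_zero) hcoeff

section PermExponent

variable {ι : Type*} [Fintype ι]

/-- The exponent of the monomial `∏ i, X i (π i)` of the generic determinant. -/
noncomputable def permExponent (π : Equiv.Perm ι) : ι × ι →₀ ℕ :=
  ∑ i, Finsupp.single (i, π i) 1

theorem permExponent_apply [DecidableEq ι] (π : Equiv.Perm ι) (i j : ι) :
    permExponent π (i, j) = if π i = j then 1 else 0 := by
  simp [permExponent, Finsupp.finsetSum_apply, Finsupp.single_apply, ite_and]

theorem sum_permExponent (π : Equiv.Perm ι) : ∑ v, permExponent π v = Fintype.card ι := by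
  classical
  simp [Fintype.sum_prod_type, permExponent_apply]

theorem permExponent_injective : Function.Injective (permExponent (ι := ι)) := by
  classical
  refine fun π τ h => Equiv.ext fun i => ?_
  simpa [permExponent_apply] using DFunLike.congr_fun h (i, τ i)

end PermExponent

section GenericDeterminant

variable {R ι : Type*} [CommRing R] [Fintype ι] [DecidableEq ι]

theorem adjugate_mvPolynomialX_mem_supported (i k : ι) :
    (Matrix.mvPolynomialX ι ι R).adjugate k i ∈ supported R {v : ι × ι | v.1 ≠ i} := by
  rw [Matrix.adjugate_apply, Matrix.det_apply]
  refine sum_mem fun σ _ => zsmul_mem (prod_mem fun j _ => ?_) _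
  by_cases hj : σ j = i
  · rw [hj, Matrix.updateRow_self]
    obtain rfl | hjk := eq_or_ne j k
    · simpa only [Pi.single_eq_same] using one_mem _
    · simpa only [Pi.single_eq_of_ne hjk] using zero_mem _
  · rw [Matrix.updateRow_ne hj, Matrix.mvPolynomialX_apply]
    exact Algebra.subset_adjoin ⟨_, hj, rfl⟩

theorem pderiv_det_mvPolynomialX (i j : ι) :
    pderiv (i, j) (Matrix.mvPolynomialX ι ι R).det = (Matrix.mvPolynomialX ι ι R).adjugate j i := by
  have hadj (k : ι) : pderiv (i, j) ((Matrix.mvPolynomialX ι ι R).adjugate k i) = 0 :=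
    pderiv_eq_zero_of_notMem_vars fun h =>
      mem_supported.1 (adjugate_mvPolynomialX_mem_supported i k) h rfl
  simp [Matrix.det_eq_sum_mul_adjugate_row _ i, hadj, pderiv_X, Pi.single_apply]

theorem det_mvPolynomialX_eq_sum_monomial :
    (Matrix.mvPolynomialX ι ι R).det =
      ∑ π : Equiv.Perm ι, monomial (permExponent π) ((Equiv.Perm.sign π : ℤ) : R) := by
  rw [← Matrix.det_transpose, Matrix.det_apply']
  refine Finset.sum_congr rfl fun π _ => ?_
  simp [permExponent, monomial_sum_index, X]

theorem coeff_permExponent_det_mvPolynomialX (π : Equiv.Perm ι) :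
    coeff (permExponent π) (Matrix.mvPolynomialX ι ι R).det = (Equiv.Perm.sign π : ℤ) := by
  simp [det_mvPolynomialX_eq_sum_monomial, coeff_sum, coeff_monomial,
    permExponent_injective.eq_iff]

theorem exists_permExponent_eq_of_mem_support_det {β : ι × ι →₀ ℕ}
    (hβ : β ∈ (Matrix.mvPolynomialX ι ι R).det.support) : ∃ π, permExponent π = β := by
  contrapose! hβ
  simp [det_mvPolynomialX_eq_sum_monomial, coeff_sum, coeff_monomial, hβ]

end GenericDeterminant

section Antidiagonal

variable {n : ℕ}

theorem degRevLexLT_permExponent_revPerm {π : Equiv.Perm (Fin n)} (hπ : π ≠ Fin.revPerm) :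
    degRevLexLT (permExponent π) (permExponent Fin.revPerm) := by
  obtain ⟨i, hi, hmax⟩ := wellFounded_gt.has_min {i | π i ≠ i.rev} (by
    by_contra! h
    exact hπ (Equiv.ext fun i => by_contra fun hi => Set.eq_empty_iff_forall_notMem.1 h i hi))
  have hrev (k : Fin n) (hk : i < k) : π k = k.rev := by_contra fun h => hmax k h hk
  -- The columns left of `i.rev` are already taken by the rows below `i`.
  have hlt : i.rev < π i := by
    refine (Ne.lt_or_gt hi).resolve_left fun h => ?_
    have hrow : i < (π i).rev := Fin.lt_rev_iff.2 h
    have hcol : π (π i).rev = π i := by rw [hrev _ hrow, Fin.rev_rev]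
    exact hrow.ne' (π.injective hcol)
  refine Or.inr ⟨by rw [sum_permExponent, sum_permExponent], (i, π i), ?_, ?_⟩
  · simp [permExponent_apply, hlt.ne]
  · rintro ⟨k, j⟩ (hk | ⟨rfl, hj⟩)
    · simp [permExponent_apply, hrev k hk]
    · simp only [permExponent_apply, Fin.revPerm_apply]
      rw [if_neg hj.ne, if_neg (hlt.trans hj).ne]

theorem isLeadingExponent_det_mvPolynomialX (R : Type*) [CommRing R] [Nontrivial R] :
    IsLeadingExponent (Matrix.mvPolynomialX (Fin n) (Fin n) R).det (permExponent Fin.revPerm) := by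
  refine ⟨?_, fun β hβ hne => ?_⟩
  · rw [mem_support_iff, coeff_permExponent_det_mvPolynomialX]
    exact ((Equiv.Perm.sign Fin.revPerm).isUnit.map (Int.castRingHom R)).ne_zero
  · obtain ⟨π, rfl⟩ := exists_permExponent_eq_of_mem_support_det hβ
    exact degRevLexLT_permExponent_revPerm fun h => hne (h ▸ rfl)

end Antidiagonal

theorem derivation_lie_apply_eq_zero {R A : Type*} [CommRing R] [CommRing A] [Algebra R A]
    {D₁ D₂ : Derivation R A A} {p : A} {a b : R} (h₁ : D₁ p = a • p) (h₂ : D₂ p = b • p) :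
    ⁅D₁, D₂⁆ p = 0 := by
  rw [Derivation.commutator_apply, h₁, h₂, Derivation.map_smul, Derivation.map_smul, h₁, h₂,
    smul_comm, sub_self]

section RowPolarization

variable {R ι κ : Type*} [Fintype κ]

section CommSemiring

variable [CommSemiring R]

/-- The polarization of row `i` to row `l`: the derivation `∑ j, X l j ∂ / ∂X i j`, which replaces
the variables of row `i` by those of row `l` and kills all others. -/
noncomputable def rowPolarization (i l : ι) :
    Derivation R (MvPolynomial (ι × κ) R) (MvPolynomial (ι × κ) R) :=
  ∑ j, (X (l, j) : MvPolynomial (ι × κ) R) • pderiv (i, j)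

theorem rowPolarization_apply (i l : ι) (p : MvPolynomial (ι × κ) R) :
    rowPolarization i l p = ∑ j, X (l, j) * pderiv (i, j) p := by
  rw [rowPolarization, ← Derivation.coeFnAddMonoidHom_apply, map_sum, Finset.sum_apply]
  rfl

theorem rowPolarization_X [DecidableEq ι] (i l a : ι) (b : κ) :
    rowPolarization i l (X (a, b) : MvPolynomial (ι × κ) R) = if a = i then X (l, b) else 0 := by
  classical
  obtain rfl | h := eq_or_ne a i <;> simp [rowPolarization_apply, pderiv_X, Pi.single_apply, *]

end CommSemiring

variable [CommRing R] [DecidableEq ι]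

theorem lie_rowPolarization (i l j k : ι) :
    ⁅rowPolarization (R := R) (κ := κ) i l, rowPolarization (R := R) (κ := κ) j k⁆ =
      (if k = i then rowPolarization (R := R) (κ := κ) j l else 0) -
        if l = j then rowPolarization i k else 0 := by
  refine derivation_ext fun ⟨a, b⟩ => ?_
  rw [Derivation.commutator_apply]
  by_cases ha : a = i <;> by_cases hb : a = j <;> split_ifs <;> simp_all [rowPolarization_X]

theorem exists_rowPolarization_eq {p : MvPolynomial (ι × κ) R}
    (h : ∀ i l : ι, ∃ a : R, rowPolarization i l p = a • p) :
    ∃ c : R, ∀ i l : ι, rowPolarization i l p = if i = l then c • p else 0 := by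
  choose a ha using h
  have hlie (i l j k : ι) := derivation_lie_apply_eq_zero (ha i l) (ha j k)
  simp only [lie_rowPolarization, Derivation.sub_apply] at hlie
  have hoff {i l : ι} (hil : i ≠ l) : rowPolarization i l p = 0 := by
    simpa [hil.symm] using hlie i i i l
  have hdiag (i l : ι) : rowPolarization l l p = rowPolarization i i p := by
    simpa [sub_eq_zero] using hlie i l l i
  rcases isEmpty_or_nonempty ι with hι | ⟨⟨i₀⟩⟩
  · exact ⟨0, fun i => hι.elim i⟩
  · refine ⟨a i₀ i₀, fun i l => ?_⟩
    split_ifs with hil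
    · rw [← hil, hdiag i₀ i, ha]
    · exact hoff hil

end RowPolarization

theorem det_mvPolynomialX_mul_pderiv {R ι : Type*} [CommRing R] [Fintype ι] [DecidableEq ι]
    {p : MvPolynomial (ι × ι) R} {c : R}
    (h : ∀ i l : ι, rowPolarization i l p = if i = l then c • p else 0) (v : ι × ι) :
    (Matrix.mvPolynomialX ι ι R).det * pderiv v p =
      c • (p * pderiv v (Matrix.mvPolynomialX ι ι R).det) := by
  obtain ⟨i, j⟩ := v
  set M := Matrix.mvPolynomialX ι ι R with hM
  let gradRow : ι → MvPolynomial (ι × ι) R := fun k => pderiv (i, k) p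
  have hsystem : M.mulVec gradRow = Pi.single i (c • p) := by
    ext1 l
    simpa [hM, gradRow, Matrix.mulVec, dotProduct, rowPolarization_apply, Pi.single_apply,
      eq_comm] using h i l
  have hcramer : M.det • gradRow = M.adjugate.mulVec (Pi.single i (c • p)) := by
    rw [← hsystem, Matrix.mulVec_mulVec, Matrix.adjugate_mul, Matrix.smul_mulVec,
      Matrix.one_mulVec]
  rw [hM, pderiv_det_mvPolynomialX]
  simpa [gradRow, mul_comm] using congrFun hcramer j

section Specialization

variable {R κ σ : Type*} [CommSemiring R]

/-- Specialization of the variables indexed by `κ` at the point `y`. The variables indexed by `κ`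
play the role of the differential indeterminates `Y`, those indexed by `σ` the role of `X`. -/
noncomputable def specialize (y : κ → R) : MvPolynomial (κ ⊕ σ) R →ₐ[R] MvPolynomial σ R :=
  aeval (Sum.elim (fun k => C (y k)) X)

theorem specialize_X_inl (y : κ → R) (k : κ) :
    specialize (σ := σ) y (X (Sum.inl k)) = C (y k) := by
  simp [specialize]

theorem specialize_X_inr (y : κ → R) (v : σ) :
    specialize y (X (Sum.inr v)) = X v := by
  simp [specialize]

theorem specialize_rename_inr (y : κ → R) (p : MvPolynomial σ R) :
    specialize y (rename Sum.inr p) = p := by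
  rw [specialize, aeval_rename, Sum.elim_comp_inr, aeval_X_left_apply]

theorem exists_specialize_eq_C {q : MvPolynomial (κ ⊕ σ) R}
    (hq : q ∈ Algebra.adjoin R (Set.range fun k : κ => X (Sum.inl k))) (y : κ → R) :
    ∃ a : R, specialize y q = C a := by
  induction hq using Algebra.adjoin_induction with
  | mem _ h =>
    obtain ⟨k, rfl⟩ := h
    exact ⟨y k, specialize_X_inl y k⟩
  | algebraMap r => exact ⟨r, (specialize y).commutes r⟩
  | add _ _ _ _ ha hb =>
    obtain ⟨⟨a, ha⟩, ⟨b, hb⟩⟩ := And.intro ha hb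
    exact ⟨a + b, by rw [map_add, ha, hb, C_add]⟩
  | mul _ _ _ _ ha hb =>
    obtain ⟨⟨a, ha⟩, ⟨b, hb⟩⟩ := And.intro ha hb
    exact ⟨a * b, by rw [map_mul, ha, hb, C_mul]⟩

end Specialization

section GenericLinearSystem

variable {R ι κ μ : Type*} [CommRing R] [Fintype ι] [Fintype μ] {d : R → R}
  {Y : ι × ι → κ} {D : Derivation ℤ (MvPolynomial (κ ⊕ ι × μ) R) (MvPolynomial (κ ⊕ ι × μ) R)}

theorem specialize_derivation_rename (hD_C : ∀ f : R, D (C f) = C (d f))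
    (hD_X : ∀ i j, D (X (Sum.inr (i, j))) = ∑ l, X (Sum.inl (Y (i, l))) * X (Sum.inr (l, j)))
    (y : κ → R) (p : MvPolynomial (ι × μ) R) :
    specialize y (D (rename Sum.inr p)) =
      specialize 0 (D (rename Sum.inr p)) + ∑ i, ∑ l, y (Y (i, l)) • rowPolarization i l p := by
  classical
  have hX (i : ι) (j : μ) : specialize y (D (X (Sum.inr (i, j)))) =
      specialize 0 (D (X (Sum.inr (i, j)))) +
        ∑ k, ∑ l, y (Y (k, l)) • rowPolarization k l (X (i, j) : MvPolynomial (ι × μ) R) := by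
    simp [hD_X, specialize_X_inl, specialize_X_inr, rowPolarization_X, smul_eq_C_mul]
  induction p using MvPolynomial.induction_on with
  | C f => simp [hD_C, specialize]
  | add p q hp hq =>
    simp only [map_add, hp, hq, smul_add, Finset.sum_add_distrib]
    ring
  | mul_X p v hp =>
    obtain ⟨i, j⟩ := v
    simp only [map_mul, map_add, rename_X, Derivation.leibniz, smul_eq_mul, hp, hX,
      specialize_rename_inr, specialize_X_inr, mul_add, smul_add, Finset.sum_add_distrib,
      Finset.mul_sum, mul_smul_comm]
    ring

theorem exists_rowPolarization_eq_smul (hY : Function.Injective Y)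
    (hD_C : ∀ f : R, D (C f) = C (d f))
    (hD_X : ∀ i j, D (X (Sum.inr (i, j))) = ∑ l, X (Sum.inl (Y (i, l))) * X (Sum.inr (l, j)))
    {p : MvPolynomial (ι × μ) R} {q : MvPolynomial (κ ⊕ ι × μ) R}
    (hq : q ∈ Algebra.adjoin R (Set.range fun k : κ => X (Sum.inl k)))
    (hDp : D (rename Sum.inr p) = q * rename Sum.inr p) (i l : ι) :
    ∃ a : R, rowPolarization i l p = a • p := by
  classical
  let y : κ → R := Pi.single (Y (i, l)) 1
  obtain ⟨a, ha⟩ := exists_specialize_eq_C hq y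
  obtain ⟨b, hb⟩ := exists_specialize_eq_C hq 0
  have hsum : ∑ i', ∑ l', y (Y (i', l')) • rowPolarization i' l' p = rowPolarization i l p := by
    simp [y, Pi.single_apply, hY.eq_iff, ite_and]
  have hsplit := specialize_derivation_rename hD_C hD_X y p
  rw [hsum, hDp, map_mul, map_mul, ha, hb, specialize_rename_inr, specialize_rename_inr] at hsplit
  exact ⟨a - b, by rw [sub_smul, smul_eq_C_mul, smul_eq_C_mul, hsplit, add_sub_cancel_left]⟩

end GenericLinearSystem

theorem stmt_11_general {R κ : Type*} [CommRing R] [IsDomain R] [CharZero R] {d : R → R} {n : ℕ}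
    {Y : Fin n × Fin n → κ} (hY : Function.Injective Y)
    (D : Derivation ℤ (MvPolynomial (κ ⊕ Fin n × Fin n) R) (MvPolynomial (κ ⊕ Fin n × Fin n) R))
    (hD_C : ∀ f : R, D (C f) = C (d f))
    (hD_X : ∀ i j, D (X (Sum.inr (i, j))) = ∑ l, X (Sum.inl (Y (i, l))) * X (Sum.inr (l, j)))
    {p : MvPolynomial (Fin n × Fin n) R} {q : MvPolynomial (κ ⊕ Fin n × Fin n) R}
    (hq : q ∈ Algebra.adjoin R (Set.range fun k : κ => X (Sum.inl k)))
    (hDp : D (rename Sum.inr p) = q * rename Sum.inr p)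
    {α : Fin n × Fin n →₀ ℕ} (hα : IsLeadingExponent p α) :
    ∃ k : ℕ, ∀ i j, α (i, j) = if j = i.rev then k else 0 := by
  obtain ⟨c, hc⟩ := exists_rowPolarization_eq (exists_rowPolarization_eq_smul hY hD_C hD_X hq hDp)
  have hcast (i j : Fin n) : (α (i, j) : R) = if j = i.rev then c else 0 := by
    rw [hα.cast_apply_eq_mul (isLeadingExponent_det_mvPolynomialX R)
      (det_mvPolynomialX_mul_pderiv hc (i, j)), permExponent_apply]
    simp [eq_comm]
  rcases isEmpty_or_nonempty (Fin n) with hn | ⟨⟨i₀⟩⟩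
  · exact ⟨0, fun i => hn.elim i⟩
  · refine ⟨α (i₀, i₀.rev), fun i j => Nat.cast_injective (R := R) ?_⟩
    simp [hcast]

/-- The leading exponent vector (degrevlex) of a nonzero Darboux
polynomial `p ∈ F[X]` is supported on the antidiagonal: `α i j = 0` for `j ≠ n+1-i`
(here `n+1-i` in 1-based indexing is `i.rev` in 0-based indexing), and if `α ≠ 0` then
`α (i, i.rev) > 0` for every `i`. -/
theorem stmt_11
    {F : Type*} [Field F] [CharZero F] (d : F → F)
    (hd_add : ∀ a b : F, d (a + b) = d a + d b)
    (hd_mul : ∀ a b : F, d (a * b) = d a * b + a * d b)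
    (n : ℕ) (hn : 1 ≤ n)
    (D : Rgen F n → Rgen F n)
    (hD_add : ∀ a b, D (a + b) = D a + D b)
    (hD_mul : ∀ a b, D (a * b) = D a * b + a * D b)
    (hD_C : ∀ f : F, D (C f) = C (d f))
    (hD_Y : ∀ (i j : Fin n) (k : ℕ),
      D (X (Sum.inl (i, j, k))) = X (Sum.inl (i, j, k + 1)))
    (hD_X : ∀ i j : Fin n,
      D (X (Sum.inr (i, j))) = ∑ l : Fin n, X (Sum.inl (i, l, 0)) * X (Sum.inr (l, j)))
    (p0 : MvPolynomial (Fin n × Fin n) F) (hp0 : p0 ≠ 0)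
    (q : Rgen F n) (hq : q ∈ FY F n)
    (hDp : D (rename Sum.inr p0) = q * rename Sum.inr p0)
    (α : (Fin n × Fin n) →₀ ℕ) (hmem : α ∈ p0.support)
    (hlead : ∀ β ∈ p0.support, β ≠ α → degRevLexLT β α)
    :
    (∀ i j : Fin n, j ≠ i.rev → α (i, j) = 0) ∧
    (α ≠ 0 → ∀ i : Fin n, 0 < α (i, i.rev)) := by
  let derivationD : Derivation ℤ (Rgen F n) (Rgen F n) :=
    .mk' (AddMonoidHom.mk' D hD_add).toIntLinearMap fun a b => by
      simp [hD_mul, mul_comm, add_comm]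
  obtain ⟨k, hk⟩ := stmt_11_general (Y := fun v => (v.1, v.2, 0))
    (fun v w h => by simpa [Prod.ext_iff] using h) derivationD hD_C hD_X hq hDp ⟨hmem, hlead⟩
  refine ⟨fun i j hij => by rw [hk, if_neg hij], fun hα i => ?_⟩
  rw [hk, if_pos rfl, Nat.pos_iff_ne_zero]
  rintro rfl
  exact hα (Finsupp.ext fun v => by simpa using hk v.1 v.2)
end
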